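/- arXiv:0912.5004 — 2 statements merged into one kernel-verified Lean document; each statement's English description precedes it below -/
import Mathlib

section
/- Let q : ℤ^n → ℤ be an integral quadratic form which is positive definite. If x, x' ∈ ℤ^n satisfy q(x) = 1 = q(x') and abs x = abs x' (that is, |x_i| = |x'_i| for all i = 1, …, n), then x = x' or x = -x'. -/
/-- Let `q : ℤ^n → ℤ` be an integral quadratic form which is positive
definite (i.e. `q x > 0` for every nonzero `x`).  If `x, x' ∈ ℤ^n` satisfy
`q x = 1 = q x'` and `|x i| = |x' i|` for all `i`, then `x = x'` or `x = -x'`. -/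
theorem abs_eq_of_pos_def_quadratic_form {n : ℕ}
    (q : QuadraticForm ℤ (Fin n → ℤ))
    (hpos : ∀ x : Fin n → ℤ, x ≠ 0 → 0 < q x)
    (x x' : Fin n → ℤ) (hx : q x = 1) (hx' : q x' = 1)
    (habs : ∀ i, |x i| = |x' i|) :
    x = x' ∨ x = -x' := by
  obtain ⟨u, v, h1, h2⟩ : ∃ u v : Fin n → ℤ, x = u + v ∧ x' = u + -v := by
    refine ⟨fun i => if x i = x' i then x i else 0, fun i => if x i = x' i then 0 else x i, ?_, ?_⟩
    · ext i
      by_cases h : x i = x' i <;> simp [h]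
    · ext i
      by_cases h : x i = x' i
      · simp [h]
      · rcases abs_eq_abs.mp (habs i) with h' | h'
        · exact absurd h' h
        · simp only [Pi.add_apply, Pi.neg_apply, if_neg h]
          omega
  have e1 : q x = q u + q v + QuadraticMap.polar q u v := by
    rw [h1, QuadraticMap.map_add q]
  have e2 : q x' = q u + q v - QuadraticMap.polar q u v := by
    rw [h2, QuadraticMap.map_add q, QuadraticMap.map_neg, QuadraticMap.polar_neg_right]
    ring
  by_cases hu : u = 0
  · right
    rw [h1, h2, hu]
    simp
  · by_cases hv : v = 0
    · left
      rw [h1, h2, hv]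
      simp
    · have := hpos u hu
      have := hpos v hv
      omega
end

section
/- Let (𝒯, ℱ) be a torsion pair in an abelian category 𝒜 (with Ext^1 groups defined): 𝒯 and ℱ are classes of objects closed under isomorphism with Hom(T, F) = 0 for all T ∈ 𝒯, F ∈ ℱ, and every object A of 𝒜 admits a short exact sequence 0 → tA → A → A/tA → 0 with tA ∈ 𝒯 and A/tA ∈ ℱ. Let Mat Ext^1(ℱ, 𝒯) be the category whose objects are triples (F, T, ε) with F ∈ ℱ, T ∈ 𝒯 and ε ∈ Ext^1(F, T), and whose morphisms (F, T, ε) → (F', T', ε') are pairs (γ : F → F', β : T → T') such that the push-forward of ε along β equals the pull-back of ε' along γ in Ext^1(F, T'). Then the assignment sending an object A to (A/tA, tA, ε_A), where ε_A is the class of the canonical sequence 0 → tA → A → A/tA → 0, extends to a functor η : 𝒜 → Mat Ext^1(ℱ, 𝒯) (on a morphism α, η(α) is the pair of induced morphisms on quotients and torsion subobjects); this functor is full and dense, and its kernel is the ideal of 𝒜 generated by all morphisms from an object of ℱ to an object of 𝒯. -/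
/-!
**Statement 7.**  Let `(𝒯, ℱ)` be a torsion pair in an abelian category `𝒜` (with `Ext¹`
groups defined).  Let `Mat Ext¹(ℱ, 𝒯)` be the category whose objects are triples
`(F, T, ε)` with `F ∈ ℱ`, `T ∈ 𝒯` and `ε ∈ Ext¹(F, T)`, and whose morphisms
`(F, T, ε) → (F', T', ε')` are pairs `(γ : F → F', β : T → T')` with `β_* ε = γ^* ε'`.
Then sending `A` to `(A/tA, tA, ε_A)` extends to a functor `η : 𝒜 → Mat Ext¹(ℱ, 𝒯)`
(acting on morphisms by the induced maps); `η` is full and dense, and its kernel is the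
ideal of morphisms factoring as a composite `A → F₀ → T₀ → A'` with `F₀ ∈ ℱ`, `T₀ ∈ 𝒯`.
-/

open CategoryTheory Abelian

universe w v u

variable {C : Type u} [Category.{v} C] [Abelian C] [HasExt.{w} C]

/-- An object of the matrix category `Mat Ext¹(ℱ, 𝒯)`: a triple `(F, T, ε)` with
`F ∈ ℱ`, `T ∈ 𝒯` and `ε ∈ Ext¹(F, T)`. -/
structure MatExtObj (𝒯 ℱ : C → Prop) where
  F : C
  T : C
  hF : ℱ F
  hT : 𝒯 T
  ε : Abelian.Ext F T 1

/-- A morphism `(F, T, ε) → (F', T', ε')` in the matrix category: a pair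
`(γ : F ⟶ F', β : T ⟶ T')` such that the push-forward of `ε` along `β` equals the
pull-back of `ε'` along `γ` in `Ext¹(F, T')`. -/
@[ext]
structure MatExtHom {𝒯 ℱ : C → Prop} (X Y : MatExtObj 𝒯 ℱ) where
  γ : X.F ⟶ Y.F
  β : X.T ⟶ Y.T
  compat : X.ε.comp (Ext.mk₀ β) (add_zero 1) = (Ext.mk₀ γ).comp Y.ε (zero_add 1)

noncomputable instance {𝒯 ℱ : C → Prop} : Category (MatExtObj 𝒯 ℱ) where
  Hom X Y := MatExtHom X Y
  id X := ⟨𝟙 X.F, 𝟙 X.T, by simp⟩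
  comp {X Y Z} f g := ⟨f.γ ≫ g.γ, f.β ≫ g.β, by
    calc X.ε.comp (Ext.mk₀ (f.β ≫ g.β)) (add_zero 1)
        = (X.ε.comp (Ext.mk₀ f.β) (add_zero 1)).comp (Ext.mk₀ g.β) (add_zero 1) := by
          rw [← Ext.mk₀_comp_mk₀, Ext.comp_assoc_of_second_deg_zero]
      _ = ((Ext.mk₀ f.γ).comp Y.ε (zero_add 1)).comp (Ext.mk₀ g.β) (add_zero 1) := by
          rw [f.compat]
      _ = (Ext.mk₀ f.γ).comp (Y.ε.comp (Ext.mk₀ g.β) (add_zero 1)) (zero_add 1) := by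
          exact Ext.comp_assoc_of_third_deg_zero _ _ _ _
      _ = (Ext.mk₀ f.γ).comp ((Ext.mk₀ g.γ).comp Z.ε (zero_add 1)) (zero_add 1) := by
          rw [g.compat]
      _ = (Ext.mk₀ (f.γ ≫ g.γ)).comp Z.ε (zero_add 1) := by
          rw [Ext.mk₀_comp_mk₀_assoc]⟩
  id_comp f := by apply MatExtHom.ext <;> simp
  comp_id f := by apply MatExtHom.ext <;> simp
  assoc f g h := by apply MatExtHom.ext <;> simp


open CategoryTheory Abelian Pretriangulated DerivedCategory in
/-- Two consecutive morphisms in a distinguished triangle of objects in degree zero. -/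
lemma matExt_shortExact_of_dist {C : Type u} [Category.{v} C] [Abelian C]
    [HasDerivedCategory.{w} C]
    {T E F : C} (f : T ⟶ E) (g : E ⟶ F)
    (h : (singleFunctor C 0).obj F ⟶ ((singleFunctor C 0).obj T)⟦(1 : ℤ)⟧)
    (hT : Triangle.mk ((singleFunctor C 0).map f) ((singleFunctor C 0).map g) h ∈
      distTriang (DerivedCategory C)) :
    ∃ (hw : f ≫ g = 0) (hS : (ShortComplex.mk f g hw).ShortExact), hS.singleδ = h := by
  have hw : f ≫ g = 0 := by
    apply (singleFunctor C 0).map_injective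
    rw [Functor.map_comp, Functor.map_zero]
    exact comp_distTriang_mor_zero₁₂ _ hT
  have hf : Mono f := by
    refine Preadditive.mono_of_cancel_zero _ fun {X} x hx => ?_
    apply (singleFunctor C 0).map_injective
    rw [Functor.map_zero]
    obtain ⟨y, hy⟩ := Triangle.coyoneda_exact₂ _ (inv_rot_of_distTriang _ hT)
      ((singleFunctor C 0).map x) (by
        change (singleFunctor C 0).map x ≫ (singleFunctor C 0).map f = 0
        rw [← Functor.map_comp, hx, Functor.map_zero])
    have : y = 0 := TStructure.t.zero_of_isLE_of_isGE y 0 1 (by lia) inferInstance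
      (TStructure.t.isGE_shift ((singleFunctor C 0).obj F) 0 (-1) 1)
    rw [hy, this]
    exact Limits.zero_comp
  have hg : Epi g := by
    refine Preadditive.epi_of_cancel_zero _ fun {X} x hx => ?_
    apply (singleFunctor C 0).map_injective
    rw [Functor.map_zero]
    obtain ⟨y, hy⟩ := Triangle.yoneda_exact₃ _ hT
      ((singleFunctor C 0).map x) (by
        change (singleFunctor C 0).map g ≫ (singleFunctor C 0).map x = 0
        rw [← Functor.map_comp, hx, Functor.map_zero])
    have : y = 0 := TStructure.t.zero_of_isLE_of_isGE y (-1) 0 (by lia)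
      (TStructure.t.isLE_shift ((singleFunctor C 0).obj T) 0 1 (-1)) inferInstance
    rw [hy, this]
    exact Limits.comp_zero
  have key : ∀ {X : C} (k : X ⟶ E), k ≫ g = 0 → ∃ l : X ⟶ T, l ≫ f = k := by
    intro X k hk
    obtain ⟨y, hy⟩ := Triangle.coyoneda_exact₂ _ hT
      ((singleFunctor C 0).map k) (by
        change (singleFunctor C 0).map k ≫ (singleFunctor C 0).map g = 0
        rw [← Functor.map_comp, hk, Functor.map_zero])
    obtain ⟨l, rfl⟩ := (singleFunctor C 0).map_surjective y
    refine ⟨l, (singleFunctor C 0).map_injective ?_⟩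
    rw [Functor.map_comp]
    exact hy.symm
  have hS : (ShortComplex.mk f g hw).ShortExact :=
    { exact := ShortComplex.exact_of_f_is_kernel _
        (Limits.KernelFork.IsLimit.ofι' _ _ fun k hk =>
          ⟨(key k hk).choose, (key k hk).choose_spec⟩)
      mono_f := hf
      epi_g := hg }
  refine ⟨hw, hS, ?_⟩
  obtain ⟨c, hc₁, hc₂⟩ := complete_distinguished_triangle_morphism _ _
    hS.singleTriangle_distinguished hT (𝟙 _) (𝟙 _)
      ((Category.comp_id _).trans (Category.id_comp _).symm)
  obtain ⟨c, rfl⟩ := (singleFunctor C 0).map_surjective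
    (X := F) (Y := F) c
  have : c = 𝟙 F := by
    rw [← cancel_epi g]
    apply (singleFunctor C 0).map_injective
    rw [Functor.map_comp, Category.comp_id]
    exact hc₁.trans (Category.id_comp _)
  subst this
  have hc₂' : hS.singleδ ≫ (shiftFunctor (DerivedCategory C) (1 : ℤ)).map (𝟙 _) =
    (singleFunctor C 0).map (𝟙 F) ≫ h := hc₂
  rw [CategoryTheory.Functor.map_id, CategoryTheory.Functor.map_id] at hc₂'
  exact (Category.comp_id _).symm.trans (hc₂'.trans (Category.id_comp _))

open CategoryTheory Abelian Pretriangulated DerivedCategory in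
/-- Every degree one extension class is the class of a short exact sequence. -/
lemma matExt_exists_shortExact {C : Type u} [Category.{v} C] [Abelian C] [HasExt.{w} C]
    {T F : C} (ε : Ext F T 1) :
    ∃ (E : C) (f : T ⟶ E) (g : E ⟶ F) (hw : f ≫ g = 0)
      (hS : (ShortComplex.mk f g hw).ShortExact), hS.extClass = ε := by
  let := HasDerivedCategory.standard C
  let h : (singleFunctor C 0).obj F ⟶ ((singleFunctor C 0).obj T)⟦(1 : ℤ)⟧ := ε.hom
  obtain ⟨Y, f, g, hT⟩ := distinguished_cocone_triangle₂ h
  have h1 : Y.IsGE 0 := TStructure.t.isGE₂ _ hT 0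
    (inferInstanceAs (((singleFunctor C 0).obj T).IsGE 0))
    (inferInstanceAs (((singleFunctor C 0).obj F).IsGE 0))
  have h2 : Y.IsLE 0 := TStructure.t.isLE₂ _ hT 0
    (inferInstanceAs (((singleFunctor C 0).obj T).IsLE 0))
    (inferInstanceAs (((singleFunctor C 0).obj F).IsLE 0))
  obtain ⟨E, ⟨e⟩⟩ := exists_iso_singleFunctor_obj_of_isGE_of_isLE Y 0
  obtain ⟨f', hf'⟩ := (singleFunctor C 0).map_surjective (f ≫ e.hom)
  obtain ⟨g', hg'⟩ := (singleFunctor C 0).map_surjective (e.inv ≫ g)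
  obtain ⟨hw, hS, hδ⟩ := matExt_shortExact_of_dist f' g' h (by
    refine isomorphic_distinguished _ hT _ (Triangle.isoMk _ _ (Iso.refl _) e.symm (Iso.refl _)
      ?_ ?_ ?_)
    · change (singleFunctor C 0).map f' ≫ e.inv = 𝟙 _ ≫ f
      rw [hf', Category.assoc, e.hom_inv_id, Category.comp_id, Category.id_comp]
    · change (singleFunctor C 0).map g' ≫ 𝟙 _ = e.inv ≫ g
      rw [hg', Category.comp_id]
    · change h ≫ (shiftFunctor (DerivedCategory C) (1 : ℤ)).map (𝟙 _) = 𝟙 _ ≫ h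
      rw [CategoryTheory.Functor.map_id]
      exact (Category.comp_id _).trans (Category.id_comp _).symm)
  refine ⟨E, f', g', hw, hS, ?_⟩
  ext
  rw [hS.extClass_hom]
  exact hδ

open CategoryTheory Abelian in
/-- Induced morphism of short exact sequences. -/
lemma matExt_exists_hom {C : Type u} [Category.{v} C] [Abelian C] {S₁ S₂ : ShortComplex C}
    (h₁ : S₁.ShortExact) (h₂ : S₂.ShortExact) (α : S₁.X₂ ⟶ S₂.X₂)
    (hα : S₁.f ≫ α ≫ S₂.g = 0) : ∃ φ : S₁ ⟶ S₂, φ.τ₂ = α := by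
  have := h₁.epi_g
  have := h₂.mono_f
  exact ⟨{ τ₁ := h₂.exact.lift (S₁.f ≫ α) (by simpa using hα)
           τ₂ := α
           τ₃ := h₁.exact.desc (α ≫ S₂.g) hα
           comm₁₂ := by simp
           comm₂₃ := by simp }, rfl⟩

/-- Given a torsion pair `(𝒯, ℱ)` in an abelian category (the classes
are closed under isomorphism, `Hom(T, F) = 0` for `T ∈ 𝒯`, `F ∈ ℱ`, and every object `A`
fits in a short exact sequence `0 → tA → A → A/tA → 0` with `tA ∈ 𝒯`, `A/tA ∈ ℱ`), the
assignment `A ↦ (A/tA, tA, ε_A)` extends to a functor `η` into `Mat Ext¹(ℱ, 𝒯)` whose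
action on a morphism `α` is the pair of induced morphisms on quotients and torsion
subobjects; this functor is full and dense, and a morphism `α` is killed by `η` iff it
factors as `A → F₀ → T₀ → A'` with `F₀ ∈ ℱ` and `T₀ ∈ 𝒯`. -/
theorem matExt_functor_full_dense_ker (𝒯 ℱ : C → Prop)
    (h𝒯iso : ∀ {X Y : C}, (X ≅ Y) → 𝒯 X → 𝒯 Y)
    (hℱiso : ∀ {X Y : C}, (X ≅ Y) → ℱ X → ℱ Y)
    (hvanish : ∀ (T F : C), 𝒯 T → ℱ F → ∀ f : T ⟶ F, f = 0)
    (tT tF : C → C) (ι : ∀ A : C, tT A ⟶ A) (π : ∀ A : C, A ⟶ tF A)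
    (hw : ∀ A : C, ι A ≫ π A = 0)
    (hSE : ∀ A : C, (ShortComplex.mk (ι A) (π A) (hw A)).ShortExact)
    (h𝒯 : ∀ A : C, 𝒯 (tT A)) (hℱ : ∀ A : C, ℱ (tF A)) :
    letI obj : C → MatExtObj 𝒯 ℱ :=
      fun A => ⟨tF A, tT A, hℱ A, h𝒯 A, (hSE A).extClass⟩
    ∃ ηm : ∀ (A A' : C), (A ⟶ A') → (obj A ⟶ obj A'),
      -- `ηm` together with `obj` is a functor `η : 𝒜 ⥤ Mat Ext¹(ℱ, 𝒯)`
      (∀ A : C, ηm A A (𝟙 A) = 𝟙 (obj A)) ∧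
      (∀ (A A' A'' : C) (f : A ⟶ A') (g : A' ⟶ A''),
        ηm A A'' (f ≫ g) = ηm A A' f ≫ ηm A' A'' g) ∧
      -- on a morphism `α`, `η` is given by the induced morphisms on the torsion
      -- subobjects and on the torsion-free quotients
      (∀ (A A' : C) (α : A ⟶ A'),
        ι A ≫ α = (ηm A A' α).β ≫ ι A' ∧ α ≫ π A' = π A ≫ (ηm A A' α).γ) ∧
      -- `η` is full
      (∀ (A A' : C) (g : obj A ⟶ obj A'), ∃ α : A ⟶ A', ηm A A' α = g) ∧
      -- `η` is dense
      (∀ X : MatExtObj 𝒯 ℱ, ∃ A : C, Nonempty (obj A ≅ X)) ∧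
      -- the kernel of `η` is the ideal generated by the morphisms `ℱ → 𝒯`, i.e. it
      -- consists of the morphisms factoring as `A → F₀ → T₀ → A'` with `F₀ ∈ ℱ`, `T₀ ∈ 𝒯`
      (∀ (A A' : C) (α : A ⟶ A'),
        ((ηm A A' α).γ = 0 ∧ (ηm A A' α).β = 0) ↔
          ∃ (F₀ T₀ : C) (_ : ℱ F₀) (_ : 𝒯 T₀)
            (u : A ⟶ F₀) (v : F₀ ⟶ T₀) (w : T₀ ⟶ A'), α = u ≫ v ≫ w) := by
  have hex : ∀ (A A' : C) (α : A ⟶ A'), ∃ φ : ShortComplex.mk (ι A) (π A) (hw A) ⟶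
      ShortComplex.mk (ι A') (π A') (hw A'), φ.τ₂ = α := fun A A' α =>
    matExt_exists_hom (hSE A) (hSE A') α (hvanish _ _ (h𝒯 A) (hℱ A') _)
  choose φ hφ using hex
  have hmono : ∀ A, Mono (ι A) := fun A => (hSE A).mono_f
  have hepi : ∀ A, Epi (π A) := fun A => (hSE A).epi_g
  have hι : ∀ (A A' : C) (α : A ⟶ A'), ι A ≫ α = (φ A A' α).τ₁ ≫ ι A' := fun A A' α => by
    have := (φ A A' α).comm₁₂
    rw [hφ] at this
    exact this.symm
  have hπ : ∀ (A A' : C) (α : A ⟶ A'), α ≫ π A' = π A ≫ (φ A A' α).τ₃ := fun A A' α => by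
    have := (φ A A' α).comm₂₃
    rw [hφ] at this
    exact this
  have hβu : ∀ (A A' : C) (α : A ⟶ A') (b : tT A ⟶ tT A'), ι A ≫ α = b ≫ ι A' →
      (φ A A' α).τ₁ = b := fun A A' α b hb => by
    have h : (φ A A' α).τ₁ ≫ ι A' = b ≫ ι A' := (hι A A' α).symm.trans hb
    exact (cancel_mono (ι A')).1 h
  have hγu : ∀ (A A' : C) (α : A ⟶ A') (c : tF A ⟶ tF A'), α ≫ π A' = π A ≫ c →
      (φ A A' α).τ₃ = c := fun A A' α c hc => by
    have h : π A ≫ (φ A A' α).τ₃ = π A ≫ c := (hπ A A' α).symm.trans hc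
    exact (cancel_epi (π A)).1 h
  refine ⟨fun A A' α => ⟨(φ A A' α).τ₃, (φ A A' α).τ₁,
    ShortComplex.ShortExact.extClass_naturality (hSE A) (hSE A') (φ A A' α)⟩,
    ?_, ?_, ?_, ?_, ?_, ?_⟩
  · intro A
    exact MatExtHom.ext (hγu _ _ _ (𝟙 _) (by simp)) (hβu _ _ _ (𝟙 _) (by simp))
  · intro A A' A'' f g
    refine MatExtHom.ext (hγu _ _ _ ((φ A A' f).τ₃ ≫ (φ A' A'' g).τ₃) ?_)
      (hβu _ _ _ ((φ A A' f).τ₁ ≫ (φ A' A'' g).τ₁) ?_)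
    · rw [Category.assoc, hπ A' A'' g, ← Category.assoc, hπ A A' f, Category.assoc]
    · rw [← Category.assoc, hι A A' f, Category.assoc, hι A' A'' g, Category.assoc]
  · intro A A' α
    exact ⟨hι A A' α, hπ A A' α⟩
  · rintro A A' ⟨γ, β, hc⟩
    change tF A ⟶ tF A' at γ
    change tT A ⟶ tT A' at β
    change (hSE A).extClass.comp (Ext.mk₀ β) (add_zero 1) =
      (Ext.mk₀ γ).comp (hSE A').extClass (zero_add 1) at hc
    have h0 : (hSE A).extClass.comp (Ext.mk₀ (β ≫ ι A')) (add_zero 1) = 0 := by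
      rw [← Ext.mk₀_comp_mk₀, ← Ext.comp_assoc_of_second_deg_zero, hc,
        Ext.comp_assoc_of_third_deg_zero]
      have : (hSE A').extClass.comp (Ext.mk₀ (ι A')) (add_zero 1) = 0 := (hSE A').extClass_comp
      rw [this, Ext.comp_zero]
    obtain ⟨x, hx⟩ := Ext.contravariant_sequence_exact₁ (hSE A) A' _ _ h0
    obtain ⟨α₀, rfl⟩ := (Ext.mk₀_bijective _ _).2 x
    have hα₀ : ι A ≫ α₀ = β ≫ ι A' := by
      apply (Ext.mk₀_bijective _ _).1
      rw [← hx, Ext.mk₀_comp_mk₀]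
    have hn : (hSE A).extClass.comp (Ext.mk₀ (φ A A' α₀).τ₁) (add_zero 1) =
        (Ext.mk₀ (φ A A' α₀).τ₃).comp (hSE A').extClass (zero_add 1) :=
      ShortComplex.ShortExact.extClass_naturality (hSE A) (hSE A') (φ A A' α₀)
    rw [hβu A A' α₀ β hα₀, hc] at hn
    obtain ⟨γ₀, hγ₀⟩ : ∃ γ₀ : tF A ⟶ tF A', γ₀ = (φ A A' α₀).τ₃ := ⟨_, rfl⟩
    have hn' : (Ext.mk₀ γ).comp (hSE A').extClass (zero_add 1) =
        (Ext.mk₀ γ₀).comp (hSE A').extClass (zero_add 1) := by rw [hγ₀]; exact hn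
    have hd : (Ext.mk₀ (γ + -γ₀)).comp (hSE A').extClass (zero_add 1) = 0 := by
      rw [Ext.mk₀_add, Ext.mk₀_neg, Ext.add_comp, Ext.neg_comp, hn', add_neg_cancel]
    obtain ⟨y, hy⟩ := Ext.covariant_sequence_exact₃ _ (hSE A') _ _ hd
    obtain ⟨δ, rfl⟩ := (Ext.mk₀_bijective _ _).2 y
    change tF A ⟶ A' at δ
    have hδ : δ ≫ π A' = γ + -γ₀ := by
      apply (Ext.mk₀_bijective _ _).1
      rw [← hy, Ext.mk₀_comp_mk₀]
    refine ⟨α₀ + π A ≫ δ, MatExtHom.ext (hγu _ _ _ _ ?_) (hβu _ _ _ _ ?_)⟩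
    · have h1 : α₀ ≫ π A' = π A ≫ γ₀ := by rw [hγ₀]; exact hπ A A' α₀
      rw [Preadditive.add_comp, Category.assoc, hδ, h1, ← Preadditive.comp_add]
      congr 1
      abel
    · rw [Preadditive.comp_add, ← Category.assoc, hw, Limits.zero_comp, add_zero, hα₀]
  · rintro ⟨F, T, hF, hT, ε⟩
    obtain ⟨E, f, g, hfg, hS, rfl⟩ := matExt_exists_shortExact ε
    obtain ⟨a, ha⟩ := matExt_exists_hom (hSE E) hS (𝟙 E) (hvanish _ _ (h𝒯 E) hF _)
    obtain ⟨b, hb⟩ := matExt_exists_hom hS (hSE E) (𝟙 E) (hvanish _ _ hT (hℱ E) _)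
    have hmf : Mono f := hS.mono_f
    have heg : Epi g := hS.epi_g
    have a1 : a.τ₁ ≫ f = ι E := by
      have := a.comm₁₂
      rw [ha] at this
      exact this.trans (Category.comp_id _)
    have b1 : b.τ₁ ≫ ι E = f := by
      have := b.comm₁₂
      rw [hb] at this
      exact this.trans (Category.comp_id _)
    have a3 : g = π E ≫ a.τ₃ := by
      have := a.comm₂₃
      rw [ha] at this
      exact (Category.id_comp _).symm.trans this
    have b3 : π E = g ≫ b.τ₃ := by
      have := b.comm₂₃
      rw [hb] at this
      exact (Category.id_comp _).symm.trans this
    refine ⟨E, ⟨⟨⟨a.τ₃, a.τ₁, ShortComplex.ShortExact.extClass_naturality (hSE E) hS a⟩,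
      ⟨b.τ₃, b.τ₁, ShortComplex.ShortExact.extClass_naturality hS (hSE E) b⟩,
      MatExtHom.ext ?_ ?_, MatExtHom.ext ?_ ?_⟩⟩⟩
    · refine (cancel_epi (π E)).1 ?_
      change π E ≫ a.τ₃ ≫ b.τ₃ = π E ≫ 𝟙 _
      rw [← Category.assoc, ← a3, ← b3, Category.comp_id]
    · refine (cancel_mono (ι E)).1 ?_
      change (a.τ₁ ≫ b.τ₁) ≫ ι E = 𝟙 _ ≫ ι E
      rw [Category.assoc, b1, a1, Category.id_comp]
    · refine (cancel_epi g).1 ?_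
      change g ≫ b.τ₃ ≫ a.τ₃ = g ≫ 𝟙 _
      rw [← Category.assoc, ← b3, ← a3, Category.comp_id]
    · refine (cancel_mono f).1 ?_
      change (b.τ₁ ≫ a.τ₁) ≫ f = 𝟙 _ ≫ f
      rw [Category.assoc, a1, b1, Category.id_comp]
  · intro A A' α
    constructor
    · rintro ⟨hγ, hβ⟩
      change (φ A A' α).τ₃ = 0 at hγ
      change (φ A A' α).τ₁ = 0 at hβ
      have h1 : ι A ≫ α = 0 := by
        rw [hι, hβ]; exact Limits.zero_comp
      have h2 : α ≫ π A' = 0 := by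
        rw [hπ, hγ]; exact Limits.comp_zero
      have hk : π A ≫ (hSE A).exact.desc α h1 = α := (hSE A).exact.g_desc α h1
      have h3 : (hSE A).exact.desc α h1 ≫ π A' = 0 := by
        refine (cancel_epi (π A)).1 ?_
        rw [← Category.assoc, hk, h2, Limits.comp_zero]
      exact ⟨tF A, tT A', hℱ A, h𝒯 A', π A, (hSE A').exact.lift _ h3, ι A', by
        have : (hSE A').exact.lift _ h3 ≫ ι A' = _ := (hSE A').exact.lift_f _ h3
        rw [this, hk]⟩
    · rintro ⟨F₀, T₀, hF₀, hT₀, u, v, w, rfl⟩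
      refine ⟨hγu _ _ _ 0 ?_, hβu _ _ _ 0 ?_⟩
      · rw [Category.assoc, Category.assoc, hvanish _ _ hT₀ (hℱ A') (w ≫ π A')]
        simp
      · rw [← Category.assoc, hvanish _ _ (h𝒯 A) hF₀ (ι A ≫ u)]
        simp
end
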